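/- Let h_c(z) = 1 + 4z/3 + 2z²/3 and let 0 < r ≤ 1/2. Then for every z ∈ ℂ with |z| = r one has Re h_c(z) ≥ 1 − 4r/3 + 2r²/3 and |h_c(z)| ≥ 1 − 4r/3 + 2r²/3, with equality in both at z = −r; that is, min_{|z|=r} Re h_c(z) = min_{|z|=r} |h_c(z)| = h_c(−r) = 1 − 4r/3 + 2r²/3. -/

import Mathlib

open Complex

/-- The cardioid function `h_c(z) = 1 + 4z/3 + 2z²/3`. -/
noncomputable def hC (z : ℂ) : ℂ := 1 + 4 * z / 3 + 2 * z ^ 2 / 3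

/-- On `|z| = r` with `r ≤ 1/2`, the real part of `hC` is at least `hC (-r)`, since the difference
is `4/3 * (Re z + r) * (1 + Re z - r)`. -/
theorem le_re_hC {r : ℝ} (hr : r ≤ 1 / 2) {z : ℂ} (hz : ‖z‖ = r) :
    1 - 4 * r / 3 + 2 * r ^ 2 / 3 ≤ (hC z).re := by
  have hsq : z.re ^ 2 + z.im ^ 2 = r ^ 2 := by
    rw [← hz, Complex.sq_norm, Complex.normSq_apply]; ring
  have hx : -r ≤ z.re := hz ▸ (abs_le.mp (Complex.abs_re_le_norm z)).1
  have hre : (hC z).re = 1 + 4 * z.re / 3 + 2 * (z.re ^ 2 - z.im ^ 2) / 3 := by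
    simp [hC, pow_two]
  rw [hre]
  nlinarith [mul_nonneg (by linarith : 0 ≤ z.re + r) (by linarith : 0 ≤ 1 + z.re - r)]

theorem hC_neg_ofReal (r : ℝ) :
    hC (-(r : ℂ)) = ((1 - 4 * r / 3 + 2 * r ^ 2 / 3 : ℝ) : ℂ) := by
  simp only [hC]; push_cast; ring

/-- for `0 < r ≤ 1/2`, on `|z| = r` both `Re h_c(z)` and `|h_c(z)|`
are minimized at `z = -r` with minimal value `h_c(-r) = 1 - 4r/3 + 2r²/3`. -/
theorem stmt11 (r : ℝ) (hr0 : 0 < r) (hr : r ≤ 1 / 2) :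
    (∀ z : ℂ, ‖z‖ = r →
        1 - 4 * r / 3 + 2 * r ^ 2 / 3 ≤ (hC z).re ∧
        1 - 4 * r / 3 + 2 * r ^ 2 / 3 ≤ ‖hC z‖) ∧
      (hC (-(r : ℂ))).re = 1 - 4 * r / 3 + 2 * r ^ 2 / 3 ∧
      ‖hC (-(r : ℂ))‖ = 1 - 4 * r / 3 + 2 * r ^ 2 / 3 := by
  refine ⟨fun z hz => ⟨le_re_hC hr hz, (le_re_hC hr hz).trans (Complex.re_le_norm _)⟩, ?_, ?_⟩
  · rw [hC_neg_ofReal, Complex.ofReal_re]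
  · rw [hC_neg_ofReal, Complex.norm_of_nonneg]
    nlinarith [sq_nonneg r]
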